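/- arXiv:2512.16486 — 2 statements merged into one kernel-verified Lean document; each statement's English description precedes it below -/
import Mathlib

section
/- Uniform quantitative enhancement via bounded connecting paths (finite-volume core of Proposition 4.1, path side). Let (V, E, ends, α) be a finite graph with boundary condition, p ∈ (0,1), q > 0, and let L ≥ 1 be an integer. Let Ẽ ⊆ E be such that every e ∈ Ẽ admits a path γ_e ∈ Γ_{E∖Ẽ}(e) with at most L−1 edges. Set δ := |p'−p| · (min(p,p'))^{L−1}. Then: if p < p', one has φ^α_{G,p,q} ≼ P_{(p'−δ·1_{e∈Ẽ})_{e∈E}}; and if p > p', one has P_{(p'+δ·1_{e∈Ẽ})_{e∈E}} ≼ φ^α_{G,p,q}. -/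
open scoped Classical

noncomputable section

namespace FKPaper

variable {V E : Type*}

/-- One-step adjacency between wired vertices through an edge in `F`. -/
def Step (ends : E → Sym2 V) (α : Setoid V) (F : Set E) (x y : Quotient α) : Prop :=
  ∃ e ∈ F, Sym2.map (Quotient.mk α) (ends e) = s(x, y)

/-- Setoid of connected components of the wired multigraph with edge set `F`. -/
def connSetoid (ends : E → Sym2 V) (α : Setoid V) (F : Set E) : Setoid (Quotient α) :=
  Relation.EqvGen.setoid (Step ends α F)

/-- Connectivity in the wired multigraph with edge set `F`. -/
def Conn (ends : E → Sym2 V) (α : Setoid V) (F : Set E) (x y : Quotient α) : Prop :=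
  (connSetoid ends α F).r x y

/-- The two endpoints of `e` are joined in the wired multigraph with edge set `F`. -/
def EndsConn (ends : E → Sym2 V) (α : Setoid V) (F : Set E) (e : E) : Prop :=
  ∀ x y : V, ends e = s(x, y) → Conn ends α F (Quotient.mk α x) (Quotient.mk α y)

/-- Number of connected components `k(ω, α)`. -/
def numComponents (ends : E → Sym2 V) (α : Setoid V) (ω : E → Bool) : ℕ :=
  Nat.card (Quotient (connSetoid ends α {e | ω e = true}))

/-- `p' = p / (p + q (1 - p))`. -/
def pPrime (p q : ℝ) : ℝ := p / (p + q * (1 - p))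

/-- Total mass of a set under a weight function. -/
def massOf {ι : Type*} [Fintype ι] (w : ι → ℝ) (A : Set ι) : ℝ :=
  ∑ x ∈ Finset.univ.filter (· ∈ A), w x

/-- Normalized probability of a set under a weight function. -/
def probOf {ι : Type*} [Fintype ι] (w : ι → ℝ) (A : Set ι) : ℝ :=
  massOf w A / massOf w Set.univ

/-- FK weight of a configuration. -/
def fkWeight [Fintype E] (ends : E → Sym2 V) (α : Setoid V) (p q : ℝ) (ω : E → Bool) : ℝ :=
  p ^ (Finset.univ.filter fun e => ω e = true).card *
    (1 - p) ^ (Finset.univ.filter fun e => ω e = false).card *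
    q ^ numComponents ends α ω

/-- The FK (random cluster) probability measure `φ^α_{G,p,q}`. -/
def fkProb [Fintype E] (ends : E → Sym2 V) (α : Setoid V) (p q : ℝ)
    (A : Set (E → Bool)) : ℝ :=
  probOf (fkWeight ends α p q) A

/-- Inhomogeneous Bernoulli weight. -/
def berWeight [Fintype E] (pe : E → ℝ) (ω : E → Bool) : ℝ :=
  ∏ e, if ω e = true then pe e else 1 - pe e

/-- Inhomogeneous Bernoulli product measure `P_{(p_e)}`. -/
def berProb [Fintype E] (pe : E → ℝ) (A : Set (E → Bool)) : ℝ :=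
  probOf (berWeight pe) A

/-- Increasing sets of configurations. -/
def Increasing (A : Set (E → Bool)) : Prop :=
  ∀ ⦃ω ω' : E → Bool⦄, ω ∈ A → (∀ e, ω e ≤ ω' e) → ω' ∈ A

/-- Stochastic domination `μ ≼ ν`. -/
def StochDom [Fintype E] (μ ν : Set (E → Bool) → ℝ) : Prop :=
  ∀ A : Set (E → Bool), Increasing A → μ A ≤ ν A

/-- `Q_F(e)`: cutsets for `e` included in `F`. -/
def Cutsets (ends : E → Sym2 V) (α : Setoid V) (F : Set E) (e : E) : Set (Set E) :=
  {χ | χ ⊆ F ∧ ¬ EndsConn ends α {e' | e' ∉ χ ∧ e' ≠ e} e}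


/-- Connectivity between wired vertices using at most `n` edges of `F`. -/
def ConnLen (ends : E → Sym2 V) (α : Setoid V) (F : Set E) :
    ℕ → Quotient α → Quotient α → Prop
  | 0, x, y => x = y
  | n + 1, x, y => x = y ∨ ∃ z, Step ends α F x z ∧ ConnLen ends α F n z y

/-- The endpoints of `e` are joined by a path of at most `n` edges of `F`. -/
def EndsConnLen (ends : E → Sym2 V) (α : Setoid V) (F : Set E) (n : ℕ) (e : E) : Prop :=
  ∀ x y : V, ends e = s(x, y) →
    ConnLen ends α F n (Quotient.mk α x) (Quotient.mk α y)


/-! ### Graph part -/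

lemma connSetoid_mono (ends : E → Sym2 V) (α : Setoid V) {F F' : Set E} (h : F ⊆ F')
    {x y : Quotient α} (hc : Conn ends α F x y) : Conn ends α F' x y := by
  have hstep : ∀ a b, Step ends α F a b → (connSetoid ends α F') a b := by
    rintro a b ⟨e, he, h2⟩
    exact Relation.EqvGen.rel _ _ ⟨e, h he, h2⟩
  exact Setoid.eqvGen_le hstep hc

lemma exists_finset_of_connLen (ends : E → Sym2 V) (α : Setoid V) (F : Set E) (n : ℕ) :
    ∀ x y : Quotient α, ConnLen ends α F n x y →
      ∃ T : Finset E, (∀ e ∈ T, e ∈ F) ∧ T.card ≤ n ∧ Conn ends α (T : Set E) x y := by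
  induction n with
  | zero =>
    intro x y h
    have h' : x = y := h
    subst h'
    exact ⟨∅, by simp, by simp, Relation.EqvGen.refl _⟩
  | succ n ih =>
    intro x y h
    rcases h with h | ⟨z, ⟨e, heF, he⟩, hz⟩
    · subst h
      exact ⟨∅, by simp, by simp, Relation.EqvGen.refl _⟩
    · obtain ⟨T, hT, hcard, hc⟩ := ih z y hz
      refine ⟨insert e T, ?_, ?_, ?_⟩
      · intro e' he'
        rcases Finset.mem_insert.1 he' with rfl | h
        · exact heF
        · exact hT _ h
      · exact (Finset.card_insert_le _ _).trans (by omega)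
      · refine Relation.EqvGen.trans _ z _ (Relation.EqvGen.rel _ _ ⟨e, by simp, he⟩) ?_
        exact connSetoid_mono ends α (by simp) hc

/-- Collapse the class of `b` onto the class of `a`. -/
def collapse (ends : E → Sym2 V) (α : Setoid V) (F : Set E) (a b : Quotient α)
    (z : Quotient α) : Quotient (connSetoid ends α F) :=
  if (Quotient.mk (connSetoid ends α F) z) = Quotient.mk _ b then Quotient.mk _ a
  else Quotient.mk _ z

lemma connSetoid_insert (ends : E → Sym2 V) (α : Setoid V) (F : Set E) (e : E)
    (a b : Quotient α) (he : Sym2.map (Quotient.mk α) (ends e) = s(a, b)) :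
    connSetoid ends α (insert e F) = Setoid.ker (collapse ends α F a b) := by
  have hsub : ∀ {x y}, Conn ends α F x y → Conn ends α (insert e F) x y :=
    fun h => connSetoid_mono ends α (Set.subset_insert _ _) h
  have hab : Conn ends α (insert e F) a b := Relation.EqvGen.rel _ _ ⟨e, by simp, he⟩
  have hmk : ∀ {x y}, (Quotient.mk (connSetoid ends α F) x = Quotient.mk _ y) ↔
      Conn ends α F x y := fun {x y} => Quotient.eq
  apply le_antisymm
  · have : ∀ x y, Step ends α (insert e F) x y →
        (Setoid.ker (collapse ends α F a b)) x y := by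
      rintro x y ⟨e', he', h⟩
      rw [Setoid.ker_def]
      rcases he' with rfl | he'
      · rw [he] at h
        rcases Sym2.eq_iff.1 h with ⟨rfl, rfl⟩ | ⟨rfl, rfl⟩
        · unfold collapse; simp
        · unfold collapse; simp
      · have hxy : Quotient.mk (connSetoid ends α F) x = Quotient.mk _ y :=
          hmk.2 (Relation.EqvGen.rel _ _ ⟨e', he', h⟩)
        unfold collapse; rw [hxy]
    exact Setoid.eqvGen_le this
  · intro x y h
    rw [Setoid.ker_def] at h
    change Conn ends α (insert e F) x y
    have key : ∀ z, ∃ z', Conn ends α (insert e F) z z' ∧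
        collapse ends α F a b z = Quotient.mk _ z' := by
      intro z
      unfold collapse
      split_ifs with hz
      · exact ⟨a, Relation.EqvGen.trans _ _ _ (hsub (hmk.1 hz)) (Relation.EqvGen.symm _ _ hab), rfl⟩
      · exact ⟨z, Relation.EqvGen.refl _, rfl⟩
    obtain ⟨x', hx, hx'⟩ := key x
    obtain ⟨y', hy, hy'⟩ := key y
    rw [hx', hy'] at h
    exact Relation.EqvGen.trans _ _ _ hx
      (Relation.EqvGen.trans _ _ _ (hsub (hmk.1 h)) (Relation.EqvGen.symm _ _ hy))

lemma card_insert_conn (ends : E → Sym2 V) (α : Setoid V) (F : Set E) (e : E)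
    (a b : Quotient α) (he : Sym2.map (Quotient.mk α) (ends e) = s(a, b))
    (hab : Conn ends α F a b) :
    Nat.card (Quotient (connSetoid ends α (insert e F))) =
      Nat.card (Quotient (connSetoid ends α F)) := by
  rw [connSetoid_insert ends α F e a b he]
  congr 2
  have : collapse ends α F a b = Quotient.mk _ := by
    funext z
    unfold collapse
    split_ifs with h
    · rw [h]; exact Quotient.sound hab
    · rfl
  rw [this]
  exact Setoid.ker_mk_eq _

lemma card_insert_not_conn [Fintype V] (ends : E → Sym2 V) (α : Setoid V) (F : Set E) (e : E)
    (a b : Quotient α) (he : Sym2.map (Quotient.mk α) (ends e) = s(a, b))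
    (hab : ¬ Conn ends α F a b) :
    Nat.card (Quotient (connSetoid ends α F)) =
      Nat.card (Quotient (connSetoid ends α (insert e F))) + 1 := by
  rw [connSetoid_insert ends α F e a b he]
  have hab' : ¬ (Quotient.mk (connSetoid ends α F) a = Quotient.mk _ b) :=
    fun h => hab (Quotient.exact h)
  rw [Nat.card_congr (Setoid.quotientKerEquivRange (collapse ends α F a b))]
  have hr : Set.range (collapse ends α F a b) = {Quotient.mk _ b}ᶜ := by
    ext c
    simp only [Set.mem_range, Set.mem_compl_iff, Set.mem_singleton_iff]
    constructor
    · rintro ⟨z, rfl⟩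
      unfold collapse
      split_ifs with h
      · exact hab'
      · exact h
    · intro h
      induction c using Quotient.inductionOn with
      | h z => exact ⟨z, by unfold collapse; rw [if_neg h]⟩
  rw [hr, Nat.card_coe_set_eq, Set.ncard_compl, Set.ncard_singleton]
  have : 0 < Nat.card (Quotient (connSetoid ends α F)) :=
    Nat.card_pos_iff.2 ⟨⟨Quotient.mk _ b⟩, inferInstance⟩
  omega

/-! ### Sums over configurations -/

section Sums
variable [Fintype E]

/-- The function does not depend on the coordinates in `R`. -/
def Indep (R : Set E) (f : (E → Bool) → ℝ) : Prop :=
  ∀ e ∈ R, ∀ ω b, f (Function.update ω e b) = f ω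

/-- Indicator of an open edge. -/
def ind (e : E) (ω : E → Bool) : ℝ := if ω e = true then 1 else 0

lemma pair_sum (e : E) (g : (E → Bool) → ℝ) :
    2 * ∑ ω, g ω = ∑ ω, (g (Function.update ω e true) + g (Function.update ω e false)) := by
  have hinv : Function.Involutive (fun ω : E → Bool => Function.update ω e (!(ω e))) := by
    intro ω
    simp
  have h1 : ∑ ω, g (Function.update ω e (!(ω e))) = ∑ ω, g ω :=
    Equiv.sum_comp hinv.toPerm g
  rw [two_mul]
  nth_rewrite 2 [← h1]
  rw [← Finset.sum_add_distrib]
  refine Finset.sum_congr rfl fun ω _ => ?_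
  rcases h : ω e with _ | _
  · have : Function.update ω e false = ω := by rw [← h]; simp
    rw [this]; simp [add_comm]
  · have : Function.update ω e true = ω := by rw [← h]; simp
    rw [this]; simp

lemma sum_zero_of_pair (e : E) (g : (E → Bool) → ℝ)
    (h : ∀ ω, g (Function.update ω e true) + g (Function.update ω e false) = 0) :
    ∑ ω, g ω = 0 := by
  have := pair_sum e g
  rw [Finset.sum_eq_zero (fun ω _ => h ω)] at this
  linarith

/-- Resampling the edge `e`. -/
def resample (pe : E → ℝ) (e : E) (f : (E → Bool) → ℝ) (ω : E → Bool) : ℝ :=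
  pe e * f (Function.update ω e true) + (1 - pe e) * f (Function.update ω e false)

lemma berWeight_update (pe : E → ℝ) (e : E) (ω : E → Bool) (b : Bool) :
    berWeight pe (Function.update ω e b) = (if b = true then pe e else 1 - pe e) *
      ∏ e' ∈ Finset.univ.erase e, (if ω e' = true then pe e' else 1 - pe e') := by
  unfold berWeight
  rw [← Finset.mul_prod_erase Finset.univ _ (Finset.mem_univ e)]
  congr 1
  · simp
  · refine Finset.prod_congr rfl fun e' he' => ?_
    rw [Function.update_of_ne (Finset.ne_of_mem_erase he')]

lemma ber_resample (pe : E → ℝ) (e : E) (f : (E → Bool) → ℝ) :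
    ∑ ω, berWeight pe ω * resample pe e f ω = ∑ ω, berWeight pe ω * f ω := by
  rw [← sub_eq_zero, ← Finset.sum_sub_distrib]
  refine sum_zero_of_pair e _ fun ω => ?_
  simp only [resample, berWeight_update, Function.update_idem]
  simp
  ring

lemma sum_resample (w : (E → Bool) → ℝ) (pe : E → ℝ) (e : E) (f : (E → Bool) → ℝ) :
    ∑ ω, w ω * resample pe e f ω - ∑ ω, w ω * f ω =
      ∑ ω, w ω * (f (Function.update ω e true) - f (Function.update ω e false)) *
        (pe e - ind e ω) := by
  rw [← Finset.sum_sub_distrib]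
  refine Finset.sum_congr rfl fun ω _ => ?_
  unfold resample ind
  rcases h : ω e with _ | _
  · have : f ω = f (Function.update ω e false) := by rw [← h]; simp
    rw [this]; simp; ring
  · have : f ω = f (Function.update ω e true) := by rw [← h]; simp
    rw [this]; simp; ring

lemma peel (w : (E → Bool) → ℝ) (pe : E → ℝ) (hpe : ∀ e, 0 ≤ pe e ∧ pe e ≤ 1) (σ : ℝ)
    (R : Set E) (s : Finset E)
    (H : ∀ e ∈ s, ∀ D : (E → Bool) → ℝ, (∀ ω, 0 ≤ D ω) → Indep R D → Indep {e} D →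
      0 ≤ σ * ∑ ω, w ω * D ω * (pe e - ind e ω))
    (f : (E → Bool) → ℝ) (hf : Monotone f) (hR : Indep R f) :
    ∃ g : (E → Bool) → ℝ, Monotone g ∧ Indep (R ∪ (s : Set E)) g ∧
      0 ≤ σ * (∑ ω, w ω * g ω - ∑ ω, w ω * f ω) ∧
      ∑ ω, berWeight pe ω * g ω = ∑ ω, berWeight pe ω * f ω := by
  induction s using Finset.induction_on with
  | empty => exact ⟨f, hf, by simpa using hR, by simp, rfl⟩
  | insert e s hes ih =>
    obtain ⟨g, hg, hgi, hgs, hgb⟩ := ih fun e' he' => H e' (Finset.mem_insert_of_mem he')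
    have hcomm : ∀ e' ∈ R ∪ (s : Set E), ∀ ω b c,
        g (Function.update (Function.update ω e' b) e c) = g (Function.update ω e c) := by
      intro e' he' ω b c
      by_cases h : e' = e
      · subst h; simp
      · rw [Function.update_comm h, hgi e' he']
    refine ⟨resample pe e g, ?_, ?_, ?_, ?_⟩
    · intro ω ω' h
      unfold resample
      have h1 : ∀ b, g (Function.update ω e b) ≤ g (Function.update ω' e b) := fun b =>
        hg (update_le_update_iff.2 ⟨le_rfl, fun j _ => h j⟩)
      have := (hpe e).1
      have := (hpe e).2
      exact add_le_add (mul_le_mul_of_nonneg_left (h1 _) (by linarith))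
        (mul_le_mul_of_nonneg_left (h1 _) (by linarith))
    · intro e' he' ω b
      unfold resample
      by_cases h : e' = e
      · subst h; simp
      · have : e' ∈ R ∪ (s : Set E) := by
          rcases he' with he' | he'
          · exact Or.inl he'
          · right
            simpa [h] using he'
        rw [hcomm e' this, hcomm e' this]
    · have h2 := H e (Finset.mem_insert_self _ _)
        (fun ω => g (Function.update ω e true) - g (Function.update ω e false)) ?_ ?_ ?_
      · rw [← sum_resample] at h2
        nlinarith
      · intro ω
        have : g (Function.update ω e false) ≤ g (Function.update ω e true) :=
          hg (update_le_update_iff.2 ⟨Bool.false_le _, fun j _ => le_rfl⟩)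
        linarith
      · intro e' he' ω b
        simp only
        rw [hcomm e' (Or.inl he'), hcomm e' (Or.inl he')]
      · intro e' he' ω b
        obtain rfl : e' = e := he'
        simp
    · rw [ber_resample, hgb]

lemma const_of_indep (f : (E → Bool) → ℝ) (h : Indep Set.univ f) (ω : E → Bool) :
    f ω = f (fun _ => false) := by
  have : ∀ s : Finset E, f (fun e => if e ∈ s then ω e else false) = f (fun _ => false) := by
    intro s
    induction s using Finset.induction_on with
    | empty => simp
    | insert e s hes ih =>
      rw [← ih, ← h e (Set.mem_univ _) (fun e => if e ∈ s then ω e else false) (ω e)]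
      congr 1
      funext e'
      by_cases he : e' = e
      · subst he; simp
      · simp [he]
  simpa using this Finset.univ

lemma sum_berWeight (pe : E → ℝ) : ∑ ω, berWeight pe ω = 1 := by
  unfold berWeight
  have := Finset.prod_univ_sum (fun _ : E => (Finset.univ : Finset Bool))
    (fun e b => if b = true then pe e else 1 - pe e)
  rw [Fintype.piFinset_univ] at this
  rw [← this]
  simp

lemma massOf_eq (w : (E → Bool) → ℝ) (A : Set (E → Bool)) :
    massOf w A = ∑ ω, w ω * (if ω ∈ A then 1 else 0) := by
  unfold massOf
  rw [Finset.sum_filter]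
  simp

lemma domination (w : (E → Bool) → ℝ) (hw : ∀ ω, 0 < w ω) (pe : E → ℝ)
    (hpe : ∀ e, 0 ≤ pe e ∧ pe e ≤ 1) (σ : ℝ) (S : Set E)
    (H1 : ∀ e ∉ S, ∀ D : (E → Bool) → ℝ, (∀ ω, 0 ≤ D ω) → Indep {e} D →
      0 ≤ σ * ∑ ω, w ω * D ω * (pe e - ind e ω))
    (H2 : ∀ e ∈ S, ∀ D : (E → Bool) → ℝ, (∀ ω, 0 ≤ D ω) → Indep Sᶜ D → Indep {e} D →
      0 ≤ σ * ∑ ω, w ω * D ω * (pe e - ind e ω))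
    (A : Set (E → Bool)) (hA : Increasing A) :
    0 ≤ σ * (berProb pe A - probOf w A) := by
  have hmono : Monotone (fun ω : E → Bool => if ω ∈ A then (1 : ℝ) else 0) := by
    intro ω ω' h
    simp only
    by_cases h1 : ω ∈ A
    · rw [if_pos h1, if_pos (hA h1 h)]
    · rw [if_neg h1]; split_ifs <;> norm_num
  obtain ⟨g, hg, hgi, hgs, hgb⟩ := peel w pe hpe σ ∅ (Finset.univ.filter (· ∉ S))
    (fun e he D hD _ hi => H1 e (by simpa using he) D hD hi) _ hmono
    (fun e he => absurd he (Set.notMem_empty _))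
  obtain ⟨k, hk, hki, hks, hkb⟩ := peel w pe hpe σ Sᶜ (Finset.univ.filter (· ∈ S))
    (fun e he D hD hi1 hi => H2 e (by simpa using he) D hD hi1 hi) g hg
    (fun e he => hgi e (by simpa using he))
  have hc := const_of_indep k (fun e _ => hki e (by by_cases h : e ∈ S <;> simp [h]))
  set c := k (fun _ => false)
  have e1 : ∑ ω, berWeight pe ω * k ω = c := by
    simp_rw [hc]
    rw [← Finset.sum_mul, sum_berWeight, one_mul]
  have e2 : ∑ ω, w ω * k ω = (∑ ω, w ω) * c := by
    simp_rw [hc]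
    rw [← Finset.sum_mul]
  have hpos : 0 < ∑ ω, w ω := Finset.sum_pos (fun ω _ => hw ω) Finset.univ_nonempty
  have hb : berProb pe A = c := by
    unfold berProb probOf
    rw [massOf_eq, massOf_eq, ← hgb, ← hkb, e1]
    simp [sum_berWeight]
  have hp : probOf w A = (∑ ω, w ω * (if ω ∈ A then 1 else 0)) / ∑ ω, w ω := by
    unfold probOf
    rw [massOf_eq, massOf_eq]
    simp
  rw [hb, hp]
  have : c - (∑ ω, w ω * (if ω ∈ A then (1 : ℝ) else 0)) / ∑ ω, w ω =
      ((∑ ω, w ω) * c - ∑ ω, w ω * (if ω ∈ A then (1 : ℝ) else 0)) / ∑ ω, w ω := by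
    field_simp
  rw [this, ← mul_div_assoc]
  apply div_nonneg _ hpos.le
  rw [← e2]
  nlinarith

/-! ### FK part -/

lemma fkWeight_eq (ends : E → Sym2 V) (α : Setoid V) (p q : ℝ) (ω : E → Bool) :
    fkWeight ends α p q ω = berWeight (fun _ => p) ω * q ^ numComponents ends α ω := by
  unfold fkWeight berWeight
  congr 1
  rw [Finset.prod_ite]
  simp

/-- Indicator that `a`, `b` are connected off `e`. -/
def cind (ends : E → Sym2 V) (α : Setoid V) (e : E) (a b : Quotient α) (ω : E → Bool) : ℝ :=
  if Conn ends α {e' | e' ≠ e ∧ ω e' = true} a b then 1 else 0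

lemma cind_update (ends : E → Sym2 V) (α : Setoid V) (e : E) (a b : Quotient α)
    (ω : E → Bool) (v : Bool) :
    cind ends α e a b (Function.update ω e v) = cind ends α e a b ω := by
  unfold cind
  have : {e' | e' ≠ e ∧ Function.update ω e v e' = true} = {e' | e' ≠ e ∧ ω e' = true} := by
    ext e'
    simp only [Set.mem_setOf_eq]
    refine and_congr_right fun h => ?_
    rw [Function.update_of_ne h]
  rw [this]

lemma cind_nonneg (ends : E → Sym2 V) (α : Setoid V) (e : E) (a b : Quotient α)
    (ω : E → Bool) : 0 ≤ cind ends α e a b ω := by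
  unfold cind; split_ifs <;> norm_num

lemma cind_le (ends : E → Sym2 V) (α : Setoid V) (e : E) (a b : Quotient α)
    (ω : E → Bool) : cind ends α e a b ω ≤ 1 := by
  unfold cind; split_ifs <;> norm_num

lemma fk_pair [Fintype V] (ends : E → Sym2 V) (α : Setoid V) (p q : ℝ)
    (hp : p ∈ Set.Ioo (0 : ℝ) 1) (hq : 0 < q) (e : E)
    (a b : Quotient α) (he : Sym2.map (Quotient.mk α) (ends e) = s(a, b)) (ω : E → Bool) :
    fkWeight ends α p q (Function.update ω e true) =
      (pPrime p q + (p - pPrime p q) * cind ends α e a b ω) *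
      (fkWeight ends α p q (Function.update ω e true) +
        fkWeight ends α p q (Function.update ω e false)) := by
  set F := {e' | e' ≠ e ∧ ω e' = true} with hF
  have h0 : {e' | Function.update ω e false e' = true} = F := by
    ext e'
    by_cases h : e' = e
    · subst h; simp [hF]
    · simp [hF, h]
  have h1 : {e' | Function.update ω e true e' = true} = insert e F := by
    ext e'
    by_cases h : e' = e
    · subst h; simp
    · simp [hF, h]
  rw [fkWeight_eq, fkWeight_eq, berWeight_update, berWeight_update]
  unfold numComponents
  rw [h0, h1]
  unfold cind
  rw [← hF]
  have hd : p + q * (1 - p) ≠ 0 := by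
    have := hp.1
    have := mul_pos hq (sub_pos.2 hp.2)
    linarith
  by_cases hc : Conn ends α F a b
  · rw [card_insert_conn ends α F e a b he hc, if_pos hc]
    simp; ring
  · rw [if_neg hc, card_insert_not_conn ends α F e a b he hc, pow_succ]
    have hpp : pPrime p q * (p + q * (1 - p)) = p := div_mul_cancel₀ _ hd
    generalize (∏ e' ∈ Finset.univ.erase e, if ω e' = true then p else 1 - p) = C
    generalize q ^ Nat.card (Quotient (connSetoid ends α (insert e F))) = Q
    simp only [if_true, Bool.false_eq_true, if_false]
    linear_combination (-(C * Q)) * hpp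

lemma fk_sum [Fintype V] (ends : E → Sym2 V) (α : Setoid V) (p q : ℝ)
    (hp : p ∈ Set.Ioo (0 : ℝ) 1) (hq : 0 < q) (e : E)
    (a b : Quotient α) (he : Sym2.map (Quotient.mk α) (ends e) = s(a, b))
    (D : (E → Bool) → ℝ) (hD : Indep {e} D) :
    ∑ ω, fkWeight ends α p q ω * D ω * ind e ω =
      ∑ ω, fkWeight ends α p q ω * D ω *
        (pPrime p q + (p - pPrime p q) * cind ends α e a b ω) := by
  rw [← sub_eq_zero, ← Finset.sum_sub_distrib]
  refine sum_zero_of_pair e _ fun ω => ?_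
  simp only [cind_update, hD e rfl]
  have := fk_pair ends α p q hp hq e a b he ω
  unfold ind
  simp
  linear_combination (D ω) * this

lemma fkWeight_pos (ends : E → Sym2 V) (α : Setoid V) (p q : ℝ)
    (hp : p ∈ Set.Ioo (0 : ℝ) 1) (hq : 0 < q) (ω : E → Bool) : 0 < fkWeight ends α p q ω := by
  unfold fkWeight
  have := hp.1
  have := sub_pos.2 hp.2
  positivity

lemma exists_ends (ends : E → Sym2 V) (α : Setoid V) (e : E) :
    ∃ x y : V, ends e = s(x, y) ∧
      Sym2.map (Quotient.mk α) (ends e) = s(Quotient.mk α x, Quotient.mk α y) := by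
  induction h : ends e using Sym2.ind with
  | h x y => exact ⟨x, y, rfl, by simp⟩

lemma finite_energy [Fintype V] (ends : E → Sym2 V) (α : Setoid V) (p q : ℝ)
    (hp : p ∈ Set.Ioo (0 : ℝ) 1) (hq : 0 < q) (m : ℝ) (hm0 : 0 ≤ m) (hm : m ≤ p)
    (hm' : m ≤ pPrime p q) (D : (E → Bool) → ℝ) (hD0 : ∀ ω, 0 ≤ D ω) (T : Finset E)
    (hD : Indep (T : Set E) D) :
    m ^ T.card * ∑ ω, fkWeight ends α p q ω * D ω ≤
      ∑ ω, fkWeight ends α p q ω * (D ω * ∏ e ∈ T, ind e ω) := by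
  induction T using Finset.induction_on with
  | empty => simp
  | insert e T heT ih =>
    have ih' := ih fun e' he' => hD e' (by simp at he' ⊢; exact Or.inr he')
    obtain ⟨x, y, -, he⟩ := exists_ends ends α e
    set D' : (E → Bool) → ℝ := fun ω => D ω * ∏ e ∈ T, ind e ω with hD'
    have hD'0 : ∀ ω, 0 ≤ D' ω := fun ω => mul_nonneg (hD0 ω)
      (Finset.prod_nonneg fun e _ => by unfold ind; split_ifs <;> norm_num)
    have hD'i : Indep {e} D' := by
      intro e' he' ω b
      obtain rfl : e' = e := he'
      simp only [hD']
      rw [hD e' (by simp)]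
      congr 1
      refine Finset.prod_congr rfl fun e'' h'' => ?_
      unfold ind
      rw [Function.update_of_ne]
      rintro rfl
      exact heT h''
    have hs := fk_sum ends α p q hp hq e _ _ he D' hD'i
    have e1 : ∑ ω, fkWeight ends α p q ω * (D ω * ∏ e ∈ insert e T, ind e ω) =
        ∑ ω, fkWeight ends α p q ω * D' ω * ind e ω := by
      refine Finset.sum_congr rfl fun ω _ => ?_
      rw [Finset.prod_insert heT]
      simp only [hD']
      ring
    rw [e1, hs, Finset.card_insert_of_notMem heT, pow_succ]
    calc m ^ T.card * m * ∑ ω, fkWeight ends α p q ω * D ω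
        = m * (m ^ T.card * ∑ ω, fkWeight ends α p q ω * D ω) := by ring
      _ ≤ m * ∑ ω, fkWeight ends α p q ω * D' ω := mul_le_mul_of_nonneg_left ih' hm0
      _ = ∑ ω, fkWeight ends α p q ω * D' ω * m := by rw [← Finset.sum_mul, mul_comm]
      _ ≤ _ := by
        refine Finset.sum_le_sum fun ω _ => ?_
        refine mul_le_mul_of_nonneg_left ?_
          (mul_nonneg (fkWeight_pos ends α p q hp hq ω).le (hD'0 ω))
        unfold cind
        split_ifs <;> linarith

lemma fk_main [Fintype V] (ends : E → Sym2 V) (α : Setoid V) (p q : ℝ)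
    (hp : p ∈ Set.Ioo (0 : ℝ) 1) (hq : 0 < q) (n : ℕ) (S : Set E)
    (hpath : ∀ e ∈ S, EndsConnLen ends α Sᶜ n e)
    (pe : E → ℝ)
    (hpe : ∀ e, pe e = pPrime p q - (pPrime p q - p) *
      (if e ∈ S then (min p (pPrime p q)) ^ n else 0))
    (A : Set (E → Bool)) (hA : Increasing A) :
    0 ≤ (pPrime p q - p) * (berProb pe A - fkProb ends α p q A) := by
  have hp0 := hp.1
  have hp1 := hp.2
  have hd : 0 < p + q * (1 - p) := by
    have := mul_pos hq (sub_pos.2 hp.2)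
    linarith
  have hp'0 : 0 < pPrime p q := div_pos hp0 hd
  have hp'1 : pPrime p q < 1 := by
    unfold pPrime
    rw [div_lt_one hd]
    have := mul_pos hq (sub_pos.2 hp.2)
    linarith
  have hm0 : 0 < min p (pPrime p q) := lt_min hp0 hp'0
  have hm1 : min p (pPrime p q) ≤ 1 := (min_le_left _ _).trans hp1.le
  have hw := fkWeight_pos ends α p q hp hq
  refine domination (fkWeight ends α p q) hw pe ?_ (pPrime p q - p) S ?_ ?_ A hA
  · intro e
    have ht : ∃ t : ℝ, 0 ≤ t ∧ t ≤ 1 ∧ pe e = pPrime p q - (pPrime p q - p) * t := by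
      refine ⟨_, ?_, ?_, hpe e⟩
      · split_ifs
        · positivity
        · exact le_rfl
      · split_ifs
        · exact pow_le_one₀ hm0.le hm1
        · norm_num
    obtain ⟨t, h0, h1, h⟩ := ht
    rw [h]
    constructor <;> nlinarith
  · intro e he D hD hi
    obtain ⟨x, y, -, hxy⟩ := exists_ends ends α e
    have hs := fk_sum ends α p q hp hq e _ _ hxy D hi
    have : ∑ ω, fkWeight ends α p q ω * D ω * (pe e - ind e ω) =
        (pPrime p q - p) * ∑ ω, fkWeight ends α p q ω * D ω * cind ends α e (Quotient.mk α x) (Quotient.mk α y) ω := by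
      simp_rw [mul_sub]
      rw [Finset.sum_sub_distrib, hs, ← Finset.sum_sub_distrib, Finset.mul_sum]
      refine Finset.sum_congr rfl fun ω _ => ?_
      rw [hpe, if_neg he]
      ring
    rw [this, ← mul_assoc]
    exact mul_nonneg (mul_self_nonneg _) (Finset.sum_nonneg fun ω _ =>
      mul_nonneg (mul_nonneg (hw ω).le (hD ω)) (cind_nonneg _ _ _ _ _ _))
  · intro e he D hD hiS hi
    obtain ⟨x, y, hends, hxy⟩ := exists_ends ends α e
    have hs := fk_sum ends α p q hp hq e _ _ hxy D hi
    obtain ⟨T, hTS, hTn, hT⟩ := exists_finset_of_connLen ends α _ _ _ _ (hpath e he x y hends)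
    have : ∑ ω, fkWeight ends α p q ω * D ω * (pe e - ind e ω) =
        (pPrime p q - p) * (∑ ω, fkWeight ends α p q ω * D ω * cind ends α e (Quotient.mk α x) (Quotient.mk α y) ω -
          (min p (pPrime p q)) ^ n * ∑ ω, fkWeight ends α p q ω * D ω) := by
      simp_rw [mul_sub]
      rw [Finset.sum_sub_distrib, hs, ← Finset.sum_sub_distrib, Finset.mul_sum, Finset.mul_sum,
        Finset.mul_sum, ← Finset.sum_sub_distrib]
      refine Finset.sum_congr rfl fun ω _ => ?_
      rw [hpe, if_pos he]
      ring
    rw [this, ← mul_assoc]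
    refine mul_nonneg (mul_self_nonneg _) (sub_nonneg.2 ?_)
    have hfe := finite_energy ends α p q hp hq _ hm0.le (min_le_left _ _) (min_le_right _ _) D hD T
      (fun e' he' => hiS e' (hTS e' he'))
    have hsum0 : 0 ≤ ∑ ω, fkWeight ends α p q ω * D ω :=
      Finset.sum_nonneg fun ω _ => mul_nonneg (hw ω).le (hD ω)
    refine (mul_le_mul_of_nonneg_right (pow_le_pow_of_le_one hm0.le hm1 hTn) hsum0).trans
      (hfe.trans ?_)
    refine Finset.sum_le_sum fun ω _ => ?_
    rw [← mul_assoc]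
    refine mul_le_mul_of_nonneg_left ?_ (mul_nonneg (hw ω).le (hD ω))
    by_cases hall : ∀ e' ∈ T, ω e' = true
    · have hc : Conn ends α {e' | e' ≠ e ∧ ω e' = true} (Quotient.mk α x) (Quotient.mk α y) := by
        refine connSetoid_mono ends α ?_ hT
        intro e' he'
        refine ⟨?_, hall e' he'⟩
        rintro rfl
        exact hTS _ he' he
      unfold cind
      rw [if_pos hc]
      exact Finset.prod_le_one (fun e' _ => by unfold ind; split_ifs <;> norm_num)
        (fun e' _ => by unfold ind; split_ifs <;> norm_num)
    · push Not at hall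
      obtain ⟨e', he', h⟩ := hall
      rw [Finset.prod_eq_zero he' (by unfold ind; rw [if_neg h])]
      exact cind_nonneg _ _ _ _ _ _

end Sums

/-- **Proposition 4.1, path side** (uniform quantitative enhancement via bounded
connecting paths). -/
theorem uniform_enhancement_paths
    {V E : Type*} [Fintype V] [Fintype E]
    (ends : E → Sym2 V) (α : Setoid V)
    (p q : ℝ) (hp : p ∈ Set.Ioo (0 : ℝ) 1) (hq : 0 < q)
    (L : ℕ) (hL : 1 ≤ L)
    (Etilde : Set E)
    (hpath : ∀ e ∈ Etilde, EndsConnLen ends α Etildeᶜ (L - 1) e)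
    (δ : ℝ)
    (hδ : δ = |pPrime p q - p| * (min p (pPrime p q)) ^ (L - 1)) :
    (p < pPrime p q →
      StochDom (fkProb ends α p q)
        (berProb fun e => pPrime p q - (if e ∈ Etilde then δ else 0))) ∧
    (pPrime p q < p →
      StochDom (berProb fun e => pPrime p q + (if e ∈ Etilde then δ else 0))
        (fkProb ends α p q)) := by
  constructor
  · intro h A hA
    have h1 := fk_main ends α p q hp hq (L - 1) Etilde hpath
      (fun e => pPrime p q - (if e ∈ Etilde then δ else 0)) (by
        intro e
        rw [hδ, abs_of_pos (sub_pos.2 h)]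
        split_ifs <;> ring) A hA
    exact sub_nonneg.1 (nonneg_of_mul_nonneg_right h1 (sub_pos.2 h))
  · intro h A hA
    have h1 := fk_main ends α p q hp hq (L - 1) Etilde hpath
      (fun e => pPrime p q + (if e ∈ Etilde then δ else 0)) (by
        intro e
        rw [hδ, abs_of_neg (sub_neg.2 h)]
        split_ifs <;> ring) A hA
    have h2 := sub_neg.2 h
    by_contra h3
    push Not at h3
    nlinarith
end FKPaper
end
end

section
/- Invariance of the FK measure under the single-edge heat-bath (Glauber) update. Let (V, E, ends, α) be a finite graph with boundary condition, p ∈ (0,1), q > 0. For an edge e ∈ E, the heat-bath kernel K_e is the Markov kernel on configurations that, from ω, leaves the states of all edges other than e unchanged and sets the new state of e to open with probability r(ω) and to closed with probability 1−r(ω), where r(ω) = p if the two endpoints of e are connected in the multigraph on V/α with edge set {e' ≠ e : ω e' = true}, and r(ω) = p' = p/(p+q(1−p)) otherwise. Then for every e ∈ E, the FK measure is invariant under K_e: for every configuration ω', ∑_ω φ^α_{G,p,q}({ω}) · K_e(ω, {ω'}) = φ^α_{G,p,q}({ω'}). -/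
open scoped Classical

noncomputable section

namespace FKPaper

variable {V E : Type*}

/-- Probability that the heat-bath update at `e` opens the edge. -/
def heatBathRate [Fintype E] (ends : E → Sym2 V) (α : Setoid V) (p q : ℝ) (e : E)
    (ω : E → Bool) : ℝ :=
  if EndsConn ends α {e' | e' ≠ e ∧ ω e' = true} e then p else pPrime p q

/-- The heat-bath (Glauber) kernel at edge `e`: `heatBath ends α p q e ω {ω'}` is the
probability of moving from `ω` to `ω'`. -/
def heatBath [Fintype E] (ends : E → Sym2 V) (α : Setoid V) (p q : ℝ) (e : E)
    (ω ω' : E → Bool) : ℝ :=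
  if ∀ e' ≠ e, ω' e' = ω e' then
    (if ω' e = true then heatBathRate ends α p q e ω
     else 1 - heatBathRate ends α p q e ω)
  else 0

/-- Merging map: sends the class of `y` to the class of `x`. -/
def mergeMap {X : Type*} (s : Setoid X) (x y : X) (a : X) : Quotient s :=
  if Quotient.mk s a = Quotient.mk s y then Quotient.mk s x else Quotient.mk s a

theorem conn_mono (ends : E → Sym2 V) (α : Setoid V) {F G : Set E} (h : F ⊆ G) :
    connSetoid ends α F ≤ connSetoid ends α G := by
  intro a b hab
  have hab' : Relation.EqvGen (Step ends α F) a b := hab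
  show Relation.EqvGen (Step ends α G) a b
  clear hab
  induction hab' with
  | rel a b h' =>
    obtain ⟨e, he, h'⟩ := h'
    exact Relation.EqvGen.rel _ _ ⟨e, h he, h'⟩
  | refl a => exact Relation.EqvGen.refl a
  | symm a b _ ih => exact Relation.EqvGen.symm _ _ ih
  | trans a b c _ _ ih1 ih2 => exact Relation.EqvGen.trans _ _ _ ih1 ih2

theorem conn_insert (ends : E → Sym2 V) (α : Setoid V) (F : Set E) (e : E) (x y : V)
    (hxy : ends e = s(x, y)) :
    connSetoid ends α (insert e F) =
      Setoid.ker (mergeMap (connSetoid ends α F) (Quotient.mk α x) (Quotient.mk α y)) := by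
  have hstep : (connSetoid ends α (insert e F)) (Quotient.mk α x) (Quotient.mk α y) :=
    Relation.EqvGen.rel _ _ ⟨e, Set.mem_insert _ _, by rw [hxy]; rfl⟩
  have hmono := conn_mono ends α (Set.subset_insert e F)
  generalize hX : Quotient.mk α x = X at *
  generalize hY : Quotient.mk α y = Y at *
  apply le_antisymm
  · intro a b hab
    have hab' : Relation.EqvGen (Step ends α (insert e F)) a b := hab
    clear hab
    induction hab' with
    | rel a b h =>
      obtain ⟨e', he', h'⟩ := h
      rw [Setoid.ker_def]
      rcases he' with rfl | he'
      · rw [hxy, Sym2.map_mk, hX, hY, Sym2.eq_iff] at h'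
        rcases h' with ⟨rfl, rfl⟩ | ⟨rfl, rfl⟩ <;> simp [mergeMap]
      · have : Quotient.mk (connSetoid ends α F) a = Quotient.mk (connSetoid ends α F) b :=
          Quotient.sound (Relation.EqvGen.rel _ _ ⟨e', he', h'⟩)
        simp [mergeMap, this]
    | refl a => exact Setoid.refl' _ a
    | symm a b _ ih => exact Setoid.symm' _ ih
    | trans a b c _ _ ih1 ih2 => exact Setoid.trans' _ ih1 ih2
  · intro a b hab
    rw [Setoid.ker_def] at hab
    have key : ∀ a c, mergeMap (connSetoid ends α F) X Y a = Quotient.mk _ c →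
        (connSetoid ends α (insert e F)) a c := by
      intro a c h
      unfold mergeMap at h
      split_ifs at h with h1
      · exact Setoid.trans' _ (hmono (Quotient.exact h1))
          (Setoid.trans' _ (Setoid.symm' _ hstep) (hmono (Quotient.exact h)))
      · exact hmono (Quotient.exact h)
    obtain ⟨c, hc⟩ := Quotient.exists_rep (mergeMap (connSetoid ends α F) X Y b)
    exact Setoid.trans' _ (key a c (hab.trans hc.symm)) (Setoid.symm' _ (key b c hc.symm))

theorem card_ker_merge {X : Type*} [Finite X] (s : Setoid X) (x y : X) :
    Nat.card (Quotient s) =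
      Nat.card (Quotient (Setoid.ker (mergeMap s x y))) + if s x y then 0 else 1 := by
  rw [Nat.card_congr (Setoid.quotientKerEquivRange (mergeMap s x y))]
  split_ifs with h
  · have : Set.range (mergeMap s x y) = Set.univ := by
      ext c
      simp only [Set.mem_range, Set.mem_univ, iff_true]
      obtain ⟨a, rfl⟩ := Quotient.exists_rep c
      refine ⟨a, ?_⟩
      unfold mergeMap
      split_ifs with h1
      · rw [h1]; exact Quotient.sound h
      · rfl
    rw [this]; simp
  · have : Set.range (mergeMap s x y) = {Quotient.mk s y}ᶜ := by
      ext c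
      simp only [Set.mem_range, Set.mem_compl_iff, Set.mem_singleton_iff]
      constructor
      · rintro ⟨a, rfl⟩ h'
        unfold mergeMap at h'
        split_ifs at h' with h1
        · exact h (Quotient.exact h')
        · exact h1 h'
      · intro hc
        obtain ⟨a, rfl⟩ := Quotient.exists_rep c
        exact ⟨a, by simp only [mergeMap]; rw [if_neg hc]⟩
    rw [this]
    have h2 := Set.ncard_add_ncard_compl ({Quotient.mk s y} : Set (Quotient s))
    rw [Set.ncard_singleton] at h2
    rw [Nat.card_coe_set_eq]
    omega

theorem endsConn_iff (ends : E → Sym2 V) (α : Setoid V) (F : Set E) (e : E) (x y : V)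
    (hxy : ends e = s(x, y)) : EndsConn ends α F e ↔
      (connSetoid ends α F) (Quotient.mk α x) (Quotient.mk α y) := by
  constructor
  · intro h; exact h x y hxy
  · intro h a b hab
    rw [hxy, Sym2.eq_iff] at hab
    rcases hab with ⟨rfl, rfl⟩ | ⟨rfl, rfl⟩
    · exact h
    · exact Setoid.symm' _ h

theorem numComponents_update [Finite V] (ends : E → Sym2 V) (α : Setoid V) (ω : E → Bool)
    (e : E) :
    numComponents ends α (Function.update ω e false) =
      numComponents ends α (Function.update ω e true) +
        if EndsConn ends α {e' | e' ≠ e ∧ ω e' = true} e then 0 else 1 := by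
  obtain ⟨x, y, hxy⟩ : ∃ x y, ends e = s(x, y) := by
    induction h : ends e with | _ x y => exact ⟨x, y, rfl⟩
  have h0 : {e' | Function.update ω e false e' = true} = {e' | e' ≠ e ∧ ω e' = true} := by
    ext e'
    by_cases h : e' = e
    · subst h; simp
    · simp [h]
  have h1 : {e' | Function.update ω e true e' = true} =
      insert e {e' | e' ≠ e ∧ ω e' = true} := by
    ext e'
    by_cases h : e' = e
    · subst h; simp
    · simp [h]
  unfold numComponents
  rw [h0, h1, conn_insert ends α _ e x y hxy]
  simp only [endsConn_iff ends α _ e x y hxy]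
  exact card_ker_merge _ _ _

theorem weight_balance [Finite V] [Fintype E] (ends : E → Sym2 V) (α : Setoid V) (p q : ℝ)
    (hp : p ∈ Set.Ioo (0 : ℝ) 1) (hq : 0 < q) (e : E) (ω : E → Bool) :
    fkWeight ends α p q (Function.update ω e true) * (1 - heatBathRate ends α p q e ω) =
      fkWeight ends α p q (Function.update ω e false) * heatBathRate ends α p q e ω := by
  have hT : (Finset.univ.filter fun e' => Function.update ω e true e' = true).card =
      (Finset.univ.filter fun e' => Function.update ω e false e' = true).card + 1 := by
    rw [← Finset.card_insert_of_notMem (a := e) (by simp)]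
    congr 1
    ext e'
    by_cases h : e' = e
    · subst h; simp
    · simp [h]
  have hF : (Finset.univ.filter fun e' => Function.update ω e false e' = false).card =
      (Finset.univ.filter fun e' => Function.update ω e true e' = false).card + 1 := by
    rw [← Finset.card_insert_of_notMem (a := e) (by simp)]
    congr 1
    ext e'
    by_cases h : e' = e
    · subst h; simp
    · simp [h]
  have hk := numComponents_update ends α ω e
  unfold fkWeight heatBathRate
  rw [hT, hF, hk]
  have hpos : p + q * (1 - p) ≠ 0 := by
    have := mul_pos hq (sub_pos.2 hp.2)
    linarith [hp.1]
  split_ifs with hc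
  · simp only [pow_succ, add_zero]; ring
  · have : 1 - pPrime p q = q * (1 - p) / (p + q * (1 - p)) := by
      unfold pPrime; field_simp; ring
    rw [this]
    unfold pPrime
    simp only [pow_succ]; ring

theorem rate_congr [Fintype E] (ends : E → Sym2 V) (α : Setoid V) (p q : ℝ) (e : E)
    (ω ω' : E → Bool) (h : ∀ e' ≠ e, ω' e' = ω e') :
    heatBathRate ends α p q e ω = heatBathRate ends α p q e ω' := by
  have : {e' | e' ≠ e ∧ ω e' = true} = {e' | e' ≠ e ∧ ω' e' = true} := by
    ext e'
    simp only [Set.mem_ofPred_eq]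
    refine and_congr_right fun h' => by rw [h e' h']
  unfold heatBathRate
  rw [this]

theorem fkProb_singleton [Fintype E] (ends : E → Sym2 V) (α : Setoid V) (p q : ℝ)
    (ω : E → Bool) : fkProb ends α p q {ω} =
      fkWeight ends α p q ω / massOf (fkWeight ends α p q) Set.univ := by
  unfold fkProb probOf
  congr 1
  unfold massOf
  rw [Finset.sum_filter]
  simp

theorem sum_heatBath [Finite V] [Fintype E] (ends : E → Sym2 V) (α : Setoid V) (p q : ℝ)
    (hp : p ∈ Set.Ioo (0 : ℝ) 1) (hq : 0 < q) (e : E) (ω' : E → Bool) :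
    ∑ ω : E → Bool, fkWeight ends α p q ω * heatBath ends α p q e ω ω' =
      fkWeight ends α p q ω' := by
  have hne : Function.update ω' e true ≠ Function.update ω' e false := by
    intro h
    have := congrFun h e
    simp at this
  rw [← Finset.sum_subset (Finset.subset_univ
    {Function.update ω' e true, Function.update ω' e false}), Finset.sum_pair hne]
  · have hb := weight_balance ends α p q hp hq e ω'
    have hh : ∀ b, heatBath ends α p q e (Function.update ω' e b) ω' =
        if ω' e = true then heatBathRate ends α p q e ω'
        else 1 - heatBathRate ends α p q e ω' := by
      intro b
      have h : ∀ e' ≠ e, ω' e' = Function.update ω' e b e' := by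
        intro e' h; simp [h]
      unfold heatBath
      rw [if_pos h, rate_congr ends α p q e _ _ h]
    rw [hh, hh]
    cases hE : ω' e with
    | true =>
      have : ω' = Function.update ω' e true := by rw [← hE]; simp
      rw [← this] at hb ⊢
      simp only [if_true]; linarith
    | false =>
      have : ω' = Function.update ω' e false := by rw [← hE]; simp
      rw [← this] at hb ⊢
      simp only [Bool.false_eq_true, if_false]; linarith
  · intro ω _ hω
    unfold heatBath
    rw [if_neg, mul_zero]
    intro h
    apply hω
    have : ω = Function.update ω' e (ω e) := by
      ext e'
      by_cases h' : e' = e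
      · subst h'; simp
      · simp [h', h e' h']
    rw [this]
    cases ω e <;> simp

/-- **Invariance of the FK measure under the single-edge heat-bath (Glauber) update.** -/
theorem fk_invariant_heatBath
    {V E : Type*} [Fintype V] [Fintype E]
    (ends : E → Sym2 V) (α : Setoid V)
    (p q : ℝ) (hp : p ∈ Set.Ioo (0 : ℝ) 1) (hq : 0 < q) (e : E) :
    ∀ ω' : E → Bool,
      ∑ ω : E → Bool, fkProb ends α p q {ω} * heatBath ends α p q e ω ω'
        = fkProb ends α p q {ω'} := by
  intro ω'
  simp only [fkProb_singleton]
  rw [← sum_heatBath ends α p q hp hq e ω', Finset.sum_div]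
  exact Finset.sum_congr rfl fun ω _ => by ring
end FKPaper
end
end
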